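/- arXiv:2004.14408 — 2 statements merged into one kernel-verified Lean document; each statement's English description precedes it below -/
import Mathlib

section
/- For every α ∈ (1.58, 1.97), the function κ_α^A(x,y) = k_α^A( (k_α^A)^{-1}(x) ∗ (k_α^A)^{-1}(y) ) is neither convex nor concave in its first argument uniformly over fixed second arguments: it is not the case that for every fixed y ∈ I_α^A the map x ↦ κ_α^A(x,y) is convex on I_α^A, and it is not the case that for every fixed y ∈ I_α^A the map x ↦ κ_α^A(x,y) is concave on I_α^A. -/
open Real

noncomputable section

/-- Binary convolution `a∗b = a(1-b) + (1-a)b`. -/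
def bconv (a b : ℝ) : ℝ := a * (1 - b) + (1 - a) * b

/-- Binary Rényi entropy `h_α(p) = (1/(1-α))·log(p^α + (1-p)^α)`. -/
def binH (α p : ℝ) : ℝ := (1 / (1 - α)) * Real.log (p ^ α + (1 - p) ^ α)

/-- Inverse of `h_α` as a map `[0, log 2] → [0, 1/2]`. -/
def binHInv (α : ℝ) : ℝ → ℝ := Function.invFunOn (binH α) (Set.Icc 0 (1/2))

/-- `k_α^A(p) = (p^α + (1-p)^α)^{1/α}`. -/
def kA (α p : ℝ) : ℝ := (p ^ α + (1 - p) ^ α) ^ (1/α)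

/-- Inverse of `k_α^A`, mapping `I_α^A` back to `[0,1/2]`. -/
def kAInv (α : ℝ) : ℝ → ℝ := Function.invFunOn (kA α) (Set.Icc 0 (1/2))

/-- `δ_α^A = 2^{(1-α)/α}`. -/
def deltaA (α : ℝ) : ℝ := (2 : ℝ) ^ ((1 - α)/α)

/-- The closed interval `I_α^A` with endpoints `1` and `δ_α^A`. -/
def IA (α : ℝ) : Set ℝ := Set.uIcc 1 (deltaA α)

/-- `κ_α^A(x,y) = k_α^A((k_α^A)⁻¹(x) ∗ (k_α^A)⁻¹(y))`. -/
def kkA (α x y : ℝ) : ℝ := kA α (bconv (kAInv α x) (kAInv α y))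

/-- `k_α^H(p) = p^α + (1-p)^α`. -/
def kH (α p : ℝ) : ℝ := p ^ α + (1 - p) ^ α

/-- Inverse of `k_α^H`, mapping `I_α^H` back to `[0,1/2]`. -/
def kHInv (α : ℝ) : ℝ → ℝ := Function.invFunOn (kH α) (Set.Icc 0 (1/2))

/-- `δ_α^H = 2^{1-α}`. -/
def deltaH (α : ℝ) : ℝ := (2 : ℝ) ^ (1 - α)

/-- The closed interval `I_α^H` with endpoints `1` and `δ_α^H`. -/
def IH (α : ℝ) : Set ℝ := Set.uIcc 1 (deltaH α)

/-- `κ_α^H(x,y) = k_α^H((k_α^H)⁻¹(x) ∗ (k_α^H)⁻¹(y))`. -/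
def kkH (α x y : ℝ) : ℝ := kH α (bconv (kHInv α x) (kHInv α y))

/-- `ĥ_α(x,y) = h_α(h_α⁻¹(x) ∗ h_α⁻¹(y))`. -/
def hhat (α x y : ℝ) : ℝ := binH α (bconv (binHInv α x) (binHInv α y))

/-- Marginal on `Y` of a joint pmf. -/
def margY {X Y : Type*} [Fintype X] (p : X → Y → ℝ) (y : Y) : ℝ := ∑ x, p x y

/-- A joint pmf: nonnegative entries summing to one. -/
def IsPmf {X Y : Type*} [Fintype X] [Fintype Y] (p : X → Y → ℝ) : Prop :=
  (∀ x y, 0 ≤ p x y) ∧ ∑ x, ∑ y, p x y = 1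

/-- Arimoto conditional Rényi entropy `H_α^A(X|Y)`. -/
def condA (α : ℝ) {X Y : Type*} [Fintype X] [Fintype Y] (p : X → Y → ℝ) : ℝ :=
  (α / (1 - α)) * Real.log (∑ y, margY p y * (∑ x, (p x y / margY p y) ^ α) ^ (1/α))

/-- Hayashi conditional Rényi entropy `H_α^H(X|Y)`. -/
def condH (α : ℝ) {X Y : Type*} [Fintype X] [Fintype Y] (p : X → Y → ℝ) : ℝ :=
  (1 / (1 - α)) * Real.log (∑ y, ∑ x, margY p y * (p x y / margY p y) ^ α)

/-- Jizba–Arimitsu conditional Rényi entropy `H_α^J(X|Y)`. -/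
def condJ (α : ℝ) {X Y : Type*} [Fintype X] [Fintype Y] (p : X → Y → ℝ) : ℝ :=
  (1 / (1 - α)) * (Real.log (∑ x, ∑ y, p x y ^ α) - Real.log (∑ y, margY p y ^ α))

/-- Cachin conditional Rényi entropy `H_α^C(X|Y)`. -/
def condC (α : ℝ) {X Y : Type*} [Fintype X] [Fintype Y] (p : X → Y → ℝ) : ℝ :=
  (1 / (1 - α)) * ∑ y, margY p y * Real.log (∑ x, (p x y / margY p y) ^ α)

/-- `K_α^A(X|Y) = exp(((1-α)/α)·H_α^A(X|Y))`. -/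
def KA (α : ℝ) {X Y : Type*} [Fintype X] [Fintype Y] (p : X → Y → ℝ) : ℝ :=
  Real.exp (((1 - α)/α) * condA α p)

/-- `K_α^H(X|Y) = exp((1-α)·H_α^H(X|Y))`. -/
def KH (α : ℝ) {X Y : Type*} [Fintype X] [Fintype Y] (p : X → Y → ℝ) : ℝ :=
  Real.exp ((1 - α) * condH α p)

/-- `K_α^J(X|Y) = exp((1-α)·H_α^J(X|Y))`. -/
def KJ (α : ℝ) {X Y : Type*} [Fintype X] [Fintype Y] (p : X → Y → ℝ) : ℝ :=
  Real.exp ((1 - α) * condJ α p)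

/-- Joint pmf of `(X₁+X₂, (Y₁,Y₂))` for independent pairs `(X₁,Y₁)`, `(X₂,Y₂)`. -/
def combine {Y1 Y2 : Type*} (p1 : Bool → Y1 → ℝ) (p2 : Bool → Y2 → ℝ) :
    Bool → Y1 × Y2 → ℝ :=
  fun z y => ∑ x : Bool, p1 x y.1 * p2 (Bool.xor x z) y.2

/-- `k_∞^A(p) = max{p, 1-p}`. -/
def kInf (p : ℝ) : ℝ := max p (1 - p)

/-- Binary min-entropy `h_∞(p) = -log max{p, 1-p}`. -/
def binHInf (p : ℝ) : ℝ := - Real.log (max p (1 - p))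

/-- Inverse of the restriction of `h_∞` to `[0,1/2]`. -/
def binHInfInv : ℝ → ℝ := Function.invFunOn binHInf (Set.Icc 0 (1/2))

/-- Conditional min-entropy `H_∞(X|Y)` for binary `X`. -/
def condInf {Y : Type*} [Fintype Y] (p : Bool → Y → ℝ) : ℝ :=
  - Real.log (∑ y, margY p y * max (p false y / margY p y) (p true y / margY p y))

/-- Unconditional Rényi entropy of a finitely supported distribution. -/
def renyiEnt (α : ℝ) {X : Type*} [Fintype X] (p : X → ℝ) : ℝ :=
  (1 / (1 - α)) * Real.log (∑ x, p x ^ α)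

/-- Distribution of the mod-2 sum of two independent binary random variables. -/
def sumDist (p1 p2 : Bool → ℝ) : Bool → ℝ := fun z => ∑ x : Bool, p1 x * p2 (Bool.xor x z)

/-! Auxiliary material -/

/-- `(1+u)^α + (1-u)^α`. -/
def auxT (α u : ℝ) : ℝ := (1 + u) ^ α + (1 - u) ^ α

/-- derivative of `auxT`. -/
def auxT' (α u : ℝ) : ℝ := α * ((1 + u) ^ (α - 1) - (1 - u) ^ (α - 1))

/-- `auxT ^ (1/α)`. -/
def auxP (α u : ℝ) : ℝ := (auxT α u) ^ (1 / α)

/-- derivative of `auxP`. -/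
def auxP' (α u : ℝ) : ℝ := auxT' α u * (1 / α) * (auxT α u) ^ (1 / α - 1)

lemma auxT_pos {α u : ℝ} (h0 : 0 ≤ u) (h1 : u ≤ 1) : 0 < auxT α u := by
  unfold auxT
  have := Real.rpow_pos_of_pos (by linarith : 0 < 1 + u) α
  have := Real.rpow_nonneg (by linarith : 0 ≤ 1 - u) α
  linarith

lemma auxT_hasDeriv {α : ℝ} (hα : 1 < α) (u : ℝ) : HasDerivAt (auxT α) (auxT' α u) u := by
  have e1 : HasDerivAt (fun u : ℝ => (1 + u) ^ α) (1 * α * (1 + u) ^ (α - 1)) u :=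
    ((hasDerivAt_id u).const_add 1).rpow_const (Or.inr hα.le)
  have e2 : HasDerivAt (fun u : ℝ => (1 - u) ^ α) (-1 * α * (1 - u) ^ (α - 1)) u :=
    ((hasDerivAt_id u).const_sub 1).rpow_const (Or.inr hα.le)
  have := e1.add e2
  unfold auxT auxT'
  refine this.congr_deriv ?_
  ring

lemma auxT_strictMono {α : ℝ} (hα : 1 < α) : StrictMonoOn (auxT α) (Set.Icc 0 1) := by
  apply strictMonoOn_of_deriv_pos (convex_Icc 0 1)
  · exact fun x _ => (auxT_hasDeriv hα x).continuousAt.continuousWithinAt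
  · intro x hx
    rw [interior_Icc] at hx
    rw [(auxT_hasDeriv hα x).deriv]
    unfold auxT'
    have := Real.rpow_lt_rpow (by linarith [hx.2] : 0 ≤ 1 - x) (by linarith [hx.1] : 1 - x < 1 + x)
      (by linarith : 0 < α - 1)
    apply mul_pos <;> linarith

lemma auxP_strictMono {α : ℝ} (hα : 1 < α) : StrictMonoOn (auxP α) (Set.Icc 0 1) := by
  intro x hx y hy hxy
  exact Real.rpow_lt_rpow (auxT_pos hx.1 hx.2).le (auxT_strictMono hα hx hy hxy)
    (by positivity)

lemma auxP_zero (α : ℝ) : auxP α 0 = 2 ^ (1 / α) := by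
  unfold auxP auxT
  norm_num

lemma auxT_one {α : ℝ} (hα : 1 < α) : auxT α 1 = 2 ^ α := by
  unfold auxT
  have : (1 - 1 : ℝ) ^ α = 0 := by rw [sub_self, Real.zero_rpow (by linarith)]
  rw [this]; norm_num

lemma auxP_one {α : ℝ} (hα : 1 < α) : auxP α 1 = 2 := by
  unfold auxP
  rw [auxT_one hα, ← Real.rpow_mul (by norm_num), mul_one_div_cancel (by linarith), Real.rpow_one]

lemma kA_eq {α u : ℝ} (hα : 1 < α) (h0 : 0 ≤ u) (h1 : u ≤ 1) :
    kA α ((1 - u) / 2) = auxP α u / 2 := by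
  unfold kA auxP
  have e : ((1 - u) / 2) ^ α + (1 - (1 - u) / 2) ^ α = auxT α u / 2 ^ α := by
    rw [show 1 - (1 - u) / 2 = (1 + u) / 2 by ring, Real.div_rpow (by linarith) (by norm_num),
      Real.div_rpow (by linarith) (by norm_num)]
    unfold auxT
    ring
  rw [e, Real.div_rpow (auxT_pos h0 h1).le (by positivity), ← Real.rpow_mul (by norm_num),
    mul_one_div_cancel (by linarith), Real.rpow_one]

lemma kAInv_eq {α u : ℝ} (hα : 1 < α) (h0 : 0 ≤ u) (h1 : u ≤ 1) :
    kAInv α (auxP α u / 2) = (1 - u) / 2 := by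
  have hmem : (1 - u) / 2 ∈ Set.Icc (0 : ℝ) (1 / 2) := ⟨by linarith, by linarith⟩
  have hex : ∃ a ∈ Set.Icc (0 : ℝ) (1 / 2), kA α a = auxP α u / 2 :=
    ⟨_, hmem, kA_eq hα h0 h1⟩
  have m := Function.invFunOn_mem hex
  have e := Function.invFunOn_eq hex
  change kAInv α (auxP α u / 2) ∈ _ at m
  change kA α (kAInv α (auxP α u / 2)) = _ at e
  set q := kAInv α (auxP α u / 2)
  have hq : q = (1 - (1 - 2 * q)) / 2 := by ring
  have hq0 : 0 ≤ 1 - 2 * q := by linarith [m.2]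
  have hq1 : 1 - 2 * q ≤ 1 := by linarith [m.1]
  rw [hq, kA_eq hα hq0 hq1] at e
  have := (auxP_strictMono hα).injOn ⟨hq0, hq1⟩ ⟨h0, h1⟩ (by linarith)
  linarith

lemma kkA_eq {α u v : ℝ} (hα : 1 < α) (h0 : 0 ≤ u) (h1 : u ≤ 1) (g0 : 0 ≤ v) (g1 : v ≤ 1) :
    kkA α (auxP α u / 2) (auxP α v / 2) = auxP α (u * v) / 2 := by
  unfold kkA
  rw [kAInv_eq hα h0 h1, kAInv_eq hα g0 g1, ← kA_eq hα (by positivity) (by nlinarith)]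
  congr 1
  unfold bconv
  ring

lemma mem_IA {α u : ℝ} (hα : 1 < α) (h0 : 0 ≤ u) (h1 : u ≤ 1) : auxP α u / 2 ∈ IA α := by
  have hd : deltaA α = auxP α 0 / 2 := by
    rw [auxP_zero]
    unfold deltaA
    rw [sub_div, div_self (by linarith), Real.rpow_sub (by norm_num), Real.rpow_one]
  have a := (auxP_strictMono hα).monotoneOn ⟨le_refl _, zero_le_one⟩ ⟨h0, h1⟩ h0
  have b := (auxP_strictMono hα).monotoneOn ⟨h0, h1⟩ ⟨zero_le_one, le_refl _⟩ h1
  rw [auxP_one hα] at b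
  unfold IA
  rw [Set.mem_uIcc]
  right
  rw [hd]
  constructor <;> linarith

lemma auxP_hasDeriv {α u : ℝ} (hα : 1 < α) (h : auxT α u ≠ 0) :
    HasDerivAt (auxP α) (auxP' α u) u :=
  (auxT_hasDeriv hα u).rpow_const (Or.inl h)

lemma auxP'_one {α : ℝ} (hα : 1 < α) : auxP' α 1 = 1 := by
  unfold auxP'
  rw [auxT_one hα]
  unfold auxT'
  have : (1 - 1 : ℝ) ^ (α - 1) = 0 := by rw [sub_self, Real.zero_rpow (by linarith)]
  rw [this, ← Real.rpow_mul (by norm_num)]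
  have : α ≠ 0 := by linarith
  norm_num
  rw [show α * (α⁻¹ - 1) = - (α - 1) by field_simp; ring, Real.rpow_neg (by norm_num)]
  have : (2 : ℝ) ^ (α - 1) ≠ 0 := by positivity
  field_simp

lemma auxT'_hasDeriv {α : ℝ} : HasDerivAt (auxT' α) (2 * α * (α - 1)) 0 := by
  have e1 : HasDerivAt (fun u : ℝ => (1 + u) ^ (α - 1)) (1 * (α - 1) * (1 + 0) ^ (α - 1 - 1)) 0 :=
    ((hasDerivAt_id (0 : ℝ)).const_add 1).rpow_const (Or.inl (by norm_num))
  have e2 : HasDerivAt (fun u : ℝ => (1 - u) ^ (α - 1)) (-1 * (α - 1) * (1 - 0) ^ (α - 1 - 1)) 0 :=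
    ((hasDerivAt_id (0 : ℝ)).const_sub 1).rpow_const (Or.inl (by norm_num))
  have := (e1.sub e2).const_mul α
  unfold auxT'
  refine this.congr_deriv ?_
  norm_num
  ring

lemma auxP'_hasDeriv {α : ℝ} (hα : 1 < α) : HasDerivAt (auxP' α) (2 ^ (1 / α) * (α - 1)) 0 := by
  have hT : auxT α 0 = 2 := by unfold auxT; norm_num
  have hT' : auxT' α 0 = 0 := by unfold auxT'; norm_num
  have e2 : HasDerivAt (fun u => auxT α u ^ (1 / α - 1)) _ 0 :=
    (auxT_hasDeriv hα 0).rpow_const (p := 1 / α - 1) (Or.inl (by rw [hT]; norm_num))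
  have := ((auxT'_hasDeriv (α := α)).mul_const (1 / α)).mul e2
  unfold auxP'
  refine this.congr_deriv ?_
  rw [hT, hT', Real.rpow_sub (by norm_num), Real.rpow_one]
  have : α ≠ 0 := by linarith
  field_simp
  ring

open Filter Topology in
lemma auxP_lim {α : ℝ} (hα : 1 < α) :
    Tendsto (fun v => (auxP α v - auxP α 0) / v ^ 2) (𝓝[>] 0) (𝓝 (2 ^ (1 / α) * (α - 1) / 2)) := by
  have hP'0 : auxP' α 0 = 0 := by unfold auxP' auxT'; norm_num
  have hmem : Set.Ioo (0 : ℝ) 1 ∈ 𝓝[>] (0 : ℝ) := Ioo_mem_nhdsGT one_pos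
  have hT0 : auxT α 0 ≠ 0 := (auxT_pos le_rfl zero_le_one).ne'
  apply HasDerivAt.lhopital_zero_nhdsGT (f' := auxP' α) (g' := fun v => 2 * v)
  · filter_upwards [hmem] with x hx
    exact (auxP_hasDeriv hα (auxT_pos hx.1.le hx.2.le).ne').sub_const _
  · filter_upwards with x
    simpa using hasDerivAt_pow 2 x
  · filter_upwards [hmem] with x hx
    have := hx.1
    positivity
  · have : Tendsto (fun v => auxP α v - auxP α 0) (𝓝 0) (𝓝 (auxP α 0 - auxP α 0)) :=
      ((auxP_hasDeriv hα hT0).continuousAt.tendsto).sub_const _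
    rw [sub_self] at this
    exact this.mono_left nhdsWithin_le_nhds
  · have : Tendsto (fun v : ℝ => v ^ 2) (𝓝 0) (𝓝 (0 ^ 2)) := (continuous_pow 2).tendsto 0
    rw [show (0 : ℝ) ^ 2 = 0 by norm_num] at this
    exact this.mono_left nhdsWithin_le_nhds
  · have := (hasDerivAt_iff_tendsto_slope.1 (auxP'_hasDeriv hα)).mono_left
      (nhdsWithin_mono (0 : ℝ) (fun x (hx : 0 < x) => ne_of_gt hx) : 𝓝[>] (0 : ℝ) ≤ _)
    refine (this.div_const 2).congr ?_
    intro x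
    rw [slope_def_field, hP'0]
    by_cases hx : x = 0
    · simp [hx]
    · field_simp
      simp

/-- The numeric inequality behind non-concavity. -/
lemma num_ineq {α : ℝ} (h1 : 1.58 < α) (h2 : α < 1.97) : 4 < 2 ^ (1 / α) * (α + 1) := by
  have key : 108 * Real.log 2 < 79 * Real.log 2.58 := by
    have : Real.log ((2 : ℝ) ^ 108) < Real.log ((2.58 : ℝ) ^ 79) :=
      Real.log_lt_log (by norm_num) (by norm_num)
    rw [Real.log_pow, Real.log_pow] at this
    exact_mod_cast this
  have l2 := Real.log_two_lt_d9
  have l2' := Real.log_two_gt_d9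
  have hL : Real.log 2.58 + (1 - 2.58 / (α + 1)) ≤ Real.log (α + 1) := by
    have := Real.one_sub_inv_le_log_of_pos (show 0 < (α + 1) / 2.58 by positivity)
    rw [Real.log_div (by linarith) (by norm_num), inv_div] at this
    linarith
  have hfrac : α * (1 - 2.58 / (α + 1)) ≥ 0.612 * (α - 1.58) := by
    have : 1 - 2.58 / (α + 1) = (α - 1.58) / (α + 1) := by field_simp; ring
    rw [this, mul_div_assoc', ge_iff_le, le_div_iff₀ (by linarith)]
    nlinarith
  have hmain : 2 * α * Real.log 2 < Real.log 2 + α * Real.log (α + 1) := by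
    have := mul_le_mul_of_nonneg_left hL (by linarith : 0 ≤ α)
    nlinarith
  rw [← Real.log_lt_log_iff (by norm_num) (by positivity), Real.log_mul (by positivity) (by linarith),
    Real.log_rpow (by norm_num), show (4 : ℝ) = 2 ^ 2 by norm_num, Real.log_pow]
  have hα : 0 < α := by linarith
  push_cast
  have : α * (2 * Real.log 2) < α * (1 / α * Real.log 2 + Real.log (α + 1)) := by
    field_simp
    linarith
  exact lt_of_mul_lt_mul_left this hα.le

open Filter Topology in
lemma not_concave {α : ℝ} (h1 : 1.58 < α) (h2 : α < 1.97)
    (H : ∀ y ∈ IA α, ConcaveOn ℝ (IA α) (fun x => kkA α x y)) : False := by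
  have hα : 1 < α := by linarith
  set L := (2 : ℝ) ^ (1 / α) * (α - 1) / 2 with hL
  have hLpos : 0 < L := by
    have : 0 < α - 1 := by linarith
    positivity
  have ineq : ∀ u ∈ Set.Ioo (0 : ℝ) 1, (auxP α u - auxP α 0) ^ 2 ≤
      (auxP α (u ^ 2) - auxP α 0) * (2 - auxP α 0) := by
    intro u hu
    have hu' : u ∈ Set.Icc (0 : ℝ) 1 := ⟨hu.1.le, hu.2.le⟩
    have m1 := auxP_strictMono hα ⟨le_rfl, zero_le_one⟩ hu' hu.1
    have m2 := auxP_strictMono hα hu' ⟨zero_le_one, le_rfl⟩ hu.2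
    have := (H _ (mem_IA hα hu'.1 hu'.2)).slope_anti_adjacent (mem_IA hα le_rfl zero_le_one)
      (mem_IA hα zero_le_one le_rfl) (y := auxP α u / 2) (by linarith) (by linarith)
    simp only [kkA_eq hα hu'.1 hu'.2 hu'.1 hu'.2, kkA_eq hα le_rfl zero_le_one hu'.1 hu'.2,
      kkA_eq hα zero_le_one le_rfl hu'.1 hu'.2] at this
    rw [auxP_one hα] at this m2
    rw [div_le_div_iff₀ (by linarith) (by linarith), one_mul, zero_mul, ← sq] at this
    nlinarith
  have t1 := (auxP_lim hα).pow 2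
  have hsq : Tendsto (fun u : ℝ => u ^ 2) (𝓝[>] 0) (𝓝[>] 0) := by
    apply tendsto_nhdsWithin_of_tendsto_nhds_of_eventually_within
    · have : Tendsto (fun v : ℝ => v ^ 2) (𝓝 0) (𝓝 (0 ^ 2)) := (continuous_pow 2).tendsto 0
      rw [show (0 : ℝ) ^ 2 = 0 by norm_num] at this
      exact this.mono_left nhdsWithin_le_nhds
    · filter_upwards [self_mem_nhdsWithin] with x hx
      have : (0 : ℝ) < x := hx
      exact pow_pos this 2
  have t2 := ((auxP_lim hα).comp hsq).mul_const (2 - auxP α 0)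
  have := le_of_tendsto_of_tendsto t1 t2 (by
    filter_upwards [Ioo_mem_nhdsGT one_pos] with u hu
    have hu0 := hu.1
    have := ineq u hu
    simp only [Function.comp]
    rw [div_pow, div_mul_eq_mul_div, ← pow_mul]
    gcongr)
  rw [← hL, sq] at this
  have := le_of_mul_le_mul_left this hLpos
  rw [auxP_zero, hL] at this
  have := num_ineq h1 h2
  linarith

lemma near_one {α : ℝ} (h1 : 1.58 < α) (h2 : α < 1.97) :
    ∃ u ∈ Set.Ioo (0 : ℝ) 1, 2 - (1 - u ^ 2) / 2 < auxP α u := by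
  obtain ⟨s, hs0, hs1, hsα⟩ : ∃ s : ℝ, 0 < s ∧ s < 1 / 2 ∧ 2 * s ^ 2 < s ^ α := by
    set s : ℝ := (2 : ℝ) ^ (-34 : ℝ) with hs
    have hs0 : 0 < s := by positivity
    have hs1 : s < 1 / 2 := by
      have : s < (2 : ℝ) ^ (-1 : ℝ) := Real.rpow_lt_rpow_of_exponent_lt (by norm_num) (by norm_num)
      rw [Real.rpow_neg_one] at this
      linarith
    have hsα : 2 * s ^ 2 < s ^ α := by
      rw [hs, ← Real.rpow_natCast, ← Real.rpow_mul (by norm_num), ← Real.rpow_mul (by norm_num)]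
      have : (2 : ℝ) * 2 ^ ((-34 : ℝ) * (2 : ℕ)) = 2 ^ ((-67 : ℝ)) := by
        rw [← Real.rpow_one_add' (by norm_num) (by norm_num)]
        norm_num
      rw [this]
      apply Real.rpow_lt_rpow_of_exponent_lt (by norm_num)
      linarith
    exact ⟨s, hs0, hs1, hsα⟩
  refine ⟨1 - s, ⟨by linarith, by linarith⟩, ?_⟩
  have hb : 0 < 2 - (1 - (1 - s) ^ 2) / 2 := by nlinarith
  have hT : (2 - (1 - (1 - s) ^ 2) / 2) ^ α < auxT α (1 - s) := by
    unfold auxT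
    rw [show 1 - (1 - s) = s by ring, show 1 + (1 - s) = 2 - s by ring,
      show 2 - (1 - (1 - s) ^ 2) / 2 = 2 - s + s ^ 2 / 2 by ring]
    -- tangent bound at `y = 2 - s + s^2/2`
    set y := 2 - s + s ^ 2 / 2 with hy
    have hy0 : 0 < y := by nlinarith
    have hy2 : y ≤ 2 := by nlinarith
    have bern := one_add_mul_self_le_rpow_one_add (s := (2 - s) / y - 1) (p := α)
      (by have : 0 ≤ (2 - s) / y := div_nonneg (by linarith) hy0.le
          linarith) (by linarith)
    rw [add_sub_cancel, Real.div_rpow (by linarith) hy0.le, le_div_iff₀ (by positivity)] at bern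
    have hyy : y ^ α = y * y ^ (α - 1) := by
      rw [← Real.rpow_one_add' hy0.le (by linarith)]
      congr 1
      ring
    have hle : y ^ (α - 1) ≤ 2 := by
      calc y ^ (α - 1) ≤ 2 ^ (α - 1) := Real.rpow_le_rpow hy0.le hy2 (by linarith)
        _ ≤ 2 ^ (1 : ℝ) := Real.rpow_le_rpow_of_exponent_le (by norm_num) (by linarith)
        _ = 2 := Real.rpow_one _
    have e : (1 + α * ((2 - s) / y - 1)) * y ^ α = y ^ α - α * (s ^ 2 / 2) * y ^ (α - 1) := by
      rw [hyy]
      field_simp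
      rw [hy]
      ring
    rw [e] at bern
    have : α * (s ^ 2 / 2) * y ^ (α - 1) ≤ α * (s ^ 2 / 2) * 2 := by
      apply mul_le_mul_of_nonneg_left hle
      have : 0 < α := by linarith
      positivity
    nlinarith [sq_nonneg s]
  have := Real.rpow_lt_rpow (by positivity) hT (show 0 < 1 / α by
    have : 0 < α := by linarith
    positivity)
  rwa [← Real.rpow_mul hb.le, mul_one_div_cancel (by linarith), Real.rpow_one] at this

open Filter Topology in
lemma not_convex {α : ℝ} (h1 : 1.58 < α) (h2 : α < 1.97)
    (H : ∀ y ∈ IA α, ConvexOn ℝ (IA α) (fun x => kkA α x y)) : False := by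
  have hα : 1 < α := by linarith
  set L := (2 : ℝ) ^ (1 / α) * (α - 1) / 2 with hL
  have hLpos : 0 < L := by
    have : 0 < α - 1 := by linarith
    positivity
  obtain ⟨u, hu, hPu⟩ := near_one h1 h2
  -- scaled limit
  have lim : ∀ c : ℝ, 0 < c → Tendsto (fun v => (auxP α (c * v) - auxP α 0) / v ^ 2) (𝓝[>] 0)
      (𝓝 (c ^ 2 * L)) := by
    intro c hc
    have hm : Tendsto (fun v : ℝ => c * v) (𝓝[>] 0) (𝓝[>] 0) := by
      apply tendsto_nhdsWithin_of_tendsto_nhds_of_eventually_within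
      · have : Tendsto (fun v : ℝ => c * v) (𝓝 0) (𝓝 (c * 0)) := (continuous_const_mul c).tendsto 0
        rw [mul_zero] at this
        exact this.mono_left nhdsWithin_le_nhds
      · filter_upwards [self_mem_nhdsWithin] with x hx
        have : (0 : ℝ) < x := hx
        exact mul_pos hc this
    refine (((auxP_lim hα).comp hm).const_mul (c ^ 2)).congr ?_
    intro x
    simp only [Function.comp]
    by_cases hx : x = 0
    · simp [hx]
    · field_simp
  have three : ∀ w ∈ Set.Ioo u 1,
      (w ^ 2 - u ^ 2) * (2 - auxP α w) ≤ (1 - w ^ 2) * (auxP α w - auxP α u) := by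
    intro w hw
    have hw0 : 0 < w := hu.1.trans hw.1
    have hu' : u ∈ Set.Icc (0 : ℝ) 1 := ⟨hu.1.le, hu.2.le⟩
    have hw' : w ∈ Set.Icc (0 : ℝ) 1 := ⟨hw0.le, hw.2.le⟩
    have m1 := auxP_strictMono hα hu' hw' hw.1
    have m2 := auxP_strictMono hα hw' ⟨zero_le_one, le_rfl⟩ hw.2
    have t1 := ((lim w hw0).sub (lim u hu.1)).mul_const (2 - auxP α w)
    have t2 := ((lim 1 one_pos).sub (lim w hw0)).mul_const (auxP α w - auxP α u)
    have := le_of_tendsto_of_tendsto t1 t2 (by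
      filter_upwards [Ioo_mem_nhdsGT one_pos] with v hv
      have hv' : v ∈ Set.Icc (0 : ℝ) 1 := ⟨hv.1.le, hv.2.le⟩
      have hv0 := hv.1
      have := (H _ (mem_IA hα hv'.1 hv'.2)).slope_mono_adjacent (mem_IA hα hu'.1 hu'.2)
        (mem_IA hα zero_le_one le_rfl) (y := auxP α w / 2) (by linarith) (by linarith)
      simp only [kkA_eq hα hu'.1 hu'.2 hv'.1 hv'.2, kkA_eq hα hw'.1 hw'.2 hv'.1 hv'.2,
        kkA_eq hα zero_le_one le_rfl hv'.1 hv'.2] at this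
      rw [auxP_one hα] at this m2
      rw [div_le_div_iff₀ (by linarith) (by linarith)] at this
      rw [← sub_div, ← sub_div, div_mul_eq_mul_div, div_mul_eq_mul_div]
      gcongr ?_ / _
      nlinarith)
    have h3 : L * ((w ^ 2 - u ^ 2) * (2 - auxP α w)) ≤
        L * ((1 - w ^ 2) * (auxP α w - auxP α u)) := by nlinarith
    exact le_of_mul_le_mul_left h3 hLpos
  have hT1 : auxT α 1 ≠ 0 := (auxT_pos zero_le_one le_rfl).ne'
  have hd := auxP_hasDeriv hα hT1
  have hc : Tendsto (auxP α) (𝓝[<] 1) (𝓝 2) := by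
    have := hd.continuousAt.tendsto
    rw [auxP_one hα] at this
    exact this.mono_left nhdsWithin_le_nhds
  rw [auxP'_one hα] at hd
  have hs := (hasDerivAt_iff_tendsto_slope.1 hd).mono_left
      (nhdsWithin_mono (1 : ℝ) (fun x (hx : x < 1) => ne_of_lt hx) : 𝓝[<] (1 : ℝ) ≤ _)
  have hid : Tendsto (fun w : ℝ => w) (𝓝[<] 1) (𝓝 1) :=
    (tendsto_id (x := 𝓝 (1 : ℝ))).mono_left nhdsWithin_le_nhds
  have s1 := ((hid.pow 2).sub_const (u ^ 2)).mul hs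
  have s2 := (hid.const_add 1).mul (hc.sub_const (auxP α u))
  have := le_of_tendsto_of_tendsto s1 s2 (by
    filter_upwards [Ioo_mem_nhdsLT hu.2] with w hw
    have h3 := three w hw
    have hw1 : 0 < 1 - w := by linarith [hw.2]
    have : slope (auxP α) 1 w = (2 - auxP α w) / (1 - w) := by
      rw [slope_def_field, auxP_one hα, ← neg_sub 2, ← neg_sub 1 w, neg_div_neg_eq]
    rw [this, mul_div_assoc', div_le_iff₀ hw1]
    nlinarith)
  nlinarith

/-- For `α ∈ (1.58, 1.97)`, `κ_α^A` is neither convex nor concave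
in its first argument uniformly over fixed second arguments. -/
theorem stmt_4 (α : ℝ) (h1 : (1.58 : ℝ) < α) (h2 : α < (1.97 : ℝ)) :
    ¬ (∀ y ∈ IA α, ConvexOn ℝ (IA α) (fun x => kkA α x y)) ∧
    ¬ (∀ y ∈ IA α, ConcaveOn ℝ (IA α) (fun x => kkA α x y)) := by
  exact ⟨fun H => not_convex h1 h2 H, fun H => not_concave h1 h2 H⟩
end
end

section
/- For every α ∈ (1.387, 1.95), the function ĥ_α(x,y) = h_α( h_α^{-1}(x) ∗ h_α^{-1}(y) ) is neither convex nor concave in its first argument uniformly over fixed second arguments: it is not the case that for every fixed y ∈ [0, log 2] the map x ↦ ĥ_α(x,y) is convex on [0, log 2], and it is not the case that for every fixed y ∈ [0, log 2] the map x ↦ ĥ_α(x,y) is concave on [0, log 2]. -/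
open Real

noncomputable section

section helpers

/-- Auxiliary `F(t) = log(((1+t)^α+(1-t)^α)/2)`. -/
def auxF (α t : ℝ) : ℝ := Real.log (((1 + t) ^ α + (1 - t) ^ α) / 2)

/-- Derivative of `auxF`. -/
def auxD (α t : ℝ) : ℝ :=
  α * ((1 + t) ^ (α - 1) - (1 - t) ^ (α - 1)) / ((1 + t) ^ α + (1 - t) ^ α)

lemma auxS_pos (α t : ℝ) (h0 : -1 < t) (h1 : t ≤ 1) : 0 < (1 + t) ^ α + (1 - t) ^ α := by
  have := Real.rpow_pos_of_pos (show 0 < 1 + t by linarith) α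
  have := Real.rpow_nonneg (show 0 ≤ 1 - t by linarith) α
  linarith

lemma auxF_deriv (α t : ℝ) (hα : 1 < α) (h0 : -1 < t) (h1 : t ≤ 1) :
    HasDerivAt (auxF α) (auxD α t) t := by
  have hS := auxS_pos α t h0 h1
  have e1 : HasDerivAt (fun t : ℝ => (1 + t) ^ α) (1 * α * (1 + t) ^ (α - 1)) t :=
    ((hasDerivAt_id t).const_add 1).rpow_const (Or.inr hα.le)
  have e2 : HasDerivAt (fun t : ℝ => (1 - t) ^ α) (-1 * α * (1 - t) ^ (α - 1)) t :=
    ((hasDerivAt_id t).const_sub 1).rpow_const (Or.inr hα.le)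
  have e3 := ((e1.add e2).div_const 2).log (by simpa using hS.ne')
  refine HasDerivAt.congr_deriv (f := auxF α) e3 ?_
  simp only [auxD, Pi.add_apply]
  field_simp
  ring

lemma auxD_deriv (α : ℝ) : HasDerivAt (auxD α) (α * (α - 1)) 0 := by
  have e1 : ∀ β : ℝ, HasDerivAt (fun t : ℝ => (1 + t) ^ β) (1 * β * (1 + (0 : ℝ)) ^ (β - 1)) 0 :=
    fun β => ((hasDerivAt_id (0 : ℝ)).const_add 1).rpow_const (Or.inl (by simp))
  have e2 : ∀ β : ℝ, HasDerivAt (fun t : ℝ => (1 - t) ^ β) (-1 * β * (1 - (0 : ℝ)) ^ (β - 1)) 0 :=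
    fun β => ((hasDerivAt_id (0 : ℝ)).const_sub 1).rpow_const (Or.inl (by simp))
  have e3 := (((e1 (α - 1)).sub (e2 (α - 1))).const_mul α).div ((e1 α).add (e2 α)) (by simp)
  refine HasDerivAt.congr_deriv (f := auxD α) e3 ?_
  simp
  ring

lemma auxF_zero (α : ℝ) : auxF α 0 = 0 := by simp [auxF]

lemma auxF_one (α : ℝ) (hα : 1 < α) : auxF α 1 = (α - 1) * Real.log 2 := by
  have : (0 : ℝ) ^ α = 0 := Real.zero_rpow (by linarith)
  simp only [auxF, sub_self, this, add_zero]
  rw [Real.log_div (by norm_num; positivity) (by norm_num)]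
  norm_num
  rw [Real.log_rpow (by norm_num)]; ring

lemma auxF_mono (α : ℝ) (hα : 1 < α) : StrictMonoOn (auxF α) (Set.Icc 0 1) := by
  apply strictMonoOn_of_deriv_pos (convex_Icc 0 1)
  · intro t ht
    exact (auxF_deriv α t hα (by linarith [ht.1]) ht.2).continuousAt.continuousWithinAt
  · intro t ht
    rw [interior_Icc] at ht
    rw [(auxF_deriv α t hα (by linarith [ht.1]) ht.2.le).deriv]
    have hS := auxS_pos α t (by linarith [ht.1]) ht.2.le
    have : (1 - t) ^ (α - 1) < (1 + t) ^ (α - 1) :=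
      Real.rpow_lt_rpow (by linarith [ht.2]) (by linarith [ht.1]) (by linarith)
    unfold auxD
    apply div_pos (mul_pos (by linarith) (by linarith)) hS

lemma auxF_tendsto (α : ℝ) (hα : 1 < α) :
    Filter.Tendsto (fun t => auxF α t / t ^ 2) (nhdsWithin 0 (Set.Ioi 0))
      (nhds (α * (α - 1) / 2)) := by
  have hI : Set.Ioo (0 : ℝ) 1 ∈ nhdsWithin (0 : ℝ) (Set.Ioi 0) :=
    Ioo_mem_nhdsGT (by norm_num)
  apply HasDerivAt.lhopital_zero_nhdsGT (f' := auxD α) (g' := fun t => 2 * t)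
  · filter_upwards [hI] with t ht
    exact auxF_deriv α t hα (by linarith [ht.1]) ht.2.le
  · filter_upwards [hI] with t ht
    simpa using hasDerivAt_pow 2 t
  · filter_upwards [hI] with t ht
    have := ht.1
    positivity
  · have := (auxF_deriv α 0 hα (by norm_num) (by norm_num)).continuousAt.tendsto
    rw [auxF_zero] at this
    exact this.mono_left nhdsWithin_le_nhds
  · have : Filter.Tendsto (fun t : ℝ => t ^ 2) (nhds 0) (nhds (0 ^ 2)) :=
      (continuous_pow 2).tendsto 0
    simp only [ne_eq, OfNat.ofNat_ne_zero, not_false_eq_true, zero_pow] at this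
    exact this.mono_left nhdsWithin_le_nhds
  · have h := (auxD_deriv α).tendsto_slope_zero_right
    have h0 : auxD α 0 = 0 := by simp [auxD]
    have h2 := h.div_const 2
    refine h2.congr' ?_
    filter_upwards [hI] with t ht
    have := ht.1.ne'
    simp only [zero_add, h0, sub_zero, smul_eq_mul]
    field_simp

lemma auxF_tendsto_mul (α c : ℝ) (hα : 1 < α) (hc : 0 ≤ c) :
    Filter.Tendsto (fun s => auxF α (s * c) / s ^ 2) (nhdsWithin 0 (Set.Ioi 0))
      (nhds (α * (α - 1) / 2 * c ^ 2)) := by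
  rcases hc.eq_or_lt with rfl | hc
  · simp [auxF_zero]
  have h1 : Filter.Tendsto (fun s : ℝ => s * c) (nhdsWithin 0 (Set.Ioi 0))
      (nhdsWithin 0 (Set.Ioi 0)) := by
    apply tendsto_nhdsWithin_of_tendsto_nhds_of_eventually_within
    · have : Filter.Tendsto (fun s : ℝ => s * c) (nhds 0) (nhds (0 * c)) :=
        (continuous_mul_const c).tendsto 0
      rw [zero_mul] at this
      exact this.mono_left nhdsWithin_le_nhds
    · filter_upwards [self_mem_nhdsWithin] with s hs
      exact mul_pos hs hc
  refine (((auxF_tendsto α hα).comp h1).mul_const (c ^ 2)).congr' ?_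
  filter_upwards [self_mem_nhdsWithin] with s hs
  have : s ≠ 0 := ne_of_gt hs
  simp only [Function.comp]
  field_simp

lemma binH_eq (α t : ℝ) (hα : 1 < α) (h0 : 0 ≤ t) (h1 : t ≤ 1) :
    binH α ((1 - t) / 2) = Real.log 2 - auxF α t / (α - 1) := by
  have hS := auxS_pos α t (by linarith) h1
  have hne : α - 1 ≠ 0 := by linarith
  have hne' : 1 - α ≠ 0 := by linarith
  have e : (1 : ℝ) - (1 - t) / 2 = (1 + t) / 2 := by ring
  unfold binH auxF
  rw [e, Real.div_rpow (by linarith) (by norm_num), Real.div_rpow (by linarith) (by norm_num),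
    ← add_div, Real.log_div (by linarith) (by positivity), Real.log_rpow (by norm_num),
    Real.log_div hS.ne' (by norm_num), add_comm ((1 - t) ^ α)]
  rw [show (1 : ℝ) - α = -(α - 1) by ring]
  field_simp
  ring

lemma binHInv_eq (α t : ℝ) (hα : 1 < α) (h0 : 0 ≤ t) (h1 : t ≤ 1) :
    binHInv α (Real.log 2 - auxF α t / (α - 1)) = (1 - t) / 2 := by
  have hinj : Set.InjOn (binH α) (Set.Icc 0 (1/2)) := by
    intro a ha b hb hab
    have ea : a = (1 - (1 - 2 * a)) / 2 := by ring
    have eb : b = (1 - (1 - 2 * b)) / 2 := by ring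
    rw [ea, eb, binH_eq α _ hα (by linarith [ha.2]) (by linarith [ha.1]),
      binH_eq α _ hα (by linarith [hb.2]) (by linarith [hb.1])] at hab
    have hne : α - 1 ≠ 0 := by linarith
    have h3 : auxF α (1 - 2 * a) = auxF α (1 - 2 * b) := by
      field_simp at hab
      linarith
    have := (auxF_mono α hα).injOn ⟨by linarith [ha.2], by linarith [ha.1]⟩
      ⟨by linarith [hb.2], by linarith [hb.1]⟩ h3
    linarith
  rw [← binH_eq α t hα h0 h1]
  exact hinj.leftInvOn_invFunOn ⟨by linarith, by linarith⟩

lemma hhat_eq (α t s : ℝ) (hα : 1 < α) (h0 : 0 ≤ t) (h1 : t ≤ 1) (h0s : 0 ≤ s) (h1s : s ≤ 1) :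
    hhat α (Real.log 2 - auxF α t / (α - 1)) (Real.log 2 - auxF α s / (α - 1))
      = Real.log 2 - auxF α (s * t) / (α - 1) := by
  unfold hhat
  rw [binHInv_eq α t hα h0 h1, binHInv_eq α s hα h0s h1s,
    ← binH_eq α (s * t) hα (by positivity) (by nlinarith)]
  congr 1
  unfold bconv
  ring

lemma aux_mem (α t : ℝ) (hα : 1 < α) (h0 : 0 ≤ t) (h1 : t ≤ 1) :
    Real.log 2 - auxF α t / (α - 1) ∈ Set.Icc (0 : ℝ) (Real.log 2) := by
  have hm := (auxF_mono α hα).monotoneOn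
  have a1 : auxF α 0 ≤ auxF α t := hm ⟨le_rfl, by norm_num⟩ ⟨h0, h1⟩ h0
  have a2 : auxF α t ≤ auxF α 1 := hm ⟨h0, h1⟩ ⟨by norm_num, le_rfl⟩ h1
  rw [auxF_zero] at a1
  rw [auxF_one α hα] at a2
  have hp : 0 < α - 1 := by linarith
  constructor
  · rw [sub_nonneg, div_le_iff₀ hp]; linarith
  · have := div_nonneg a1 hp.le
    linarith

/-- Weighted point. -/
lemma aux_comb (A B X L k : ℝ) (hk : 0 < k) (hAB : A < B) :
    (X - A) / (B - A) * (L - B / k) + (B - X) / (B - A) * (L - A / k) = L - X / k := by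
  have : B - A ≠ 0 := by linarith
  field_simp
  ring

lemma aux_order (A B X L k P Q R : ℝ) (hk : 0 < k) (hAB : A < B)
    (h : L - P / k ≤ (X - A) / (B - A) * (L - Q / k) + (B - X) / (B - A) * (L - R / k)) :
    (X - A) * Q + (B - X) * R ≤ (B - A) * P := by
  have hd : 0 < B - A := by linarith
  have e : (X - A) / (B - A) * (L - Q / k) + (B - X) / (B - A) * (L - R / k) - (L - P / k)
    = ((B - A) * P - ((X - A) * Q + (B - X) * R)) / ((B - A) * k) := by
    field_simp
    ring
  have h2 : 0 ≤ ((B - A) * P - ((X - A) * Q + (B - X) * R)) / ((B - A) * k) := by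
    rw [← e]; linarith
  rw [le_div_iff₀ (by positivity)] at h2
  linarith

lemma aux_order' (A B X L k P Q R : ℝ) (hk : 0 < k) (hAB : A < B)
    (h : (X - A) / (B - A) * (L - Q / k) + (B - X) / (B - A) * (L - R / k) ≤ L - P / k) :
    (B - A) * P ≤ (X - A) * Q + (B - X) * R := by
  have hd : 0 < B - A := by linarith
  have e : (L - P / k) - ((X - A) / (B - A) * (L - Q / k) + (B - X) / (B - A) * (L - R / k))
    = (((X - A) * Q + (B - X) * R) - (B - A) * P) / ((B - A) * k) := by
    field_simp
    ring
  have h2 : 0 ≤ (((X - A) * Q + (B - X) * R) - (B - A) * P) / ((B - A) * k) := by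
    rw [← e]; linarith
  rw [le_div_iff₀ (by positivity)] at h2
  linarith

lemma aux_tend (α t₁ t : ℝ) (hα : 1 < α) (h0 : 0 ≤ t₁) (h0t : 0 ≤ t) :
    Filter.Tendsto (fun s => ((auxF α t - auxF α t₁) * auxF α (s * 1) +
        (auxF α 1 - auxF α t) * auxF α (s * t₁)) / s ^ 2) (nhdsWithin 0 (Set.Ioi 0))
      (nhds (α * (α - 1) / 2 * ((auxF α t - auxF α t₁) + (auxF α 1 - auxF α t) * t₁ ^ 2))) ∧
    Filter.Tendsto (fun s => ((auxF α 1 - auxF α t₁) * auxF α (s * t)) / s ^ 2)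
      (nhdsWithin 0 (Set.Ioi 0))
      (nhds (α * (α - 1) / 2 * ((auxF α 1 - auxF α t₁) * t ^ 2))) := by
  constructor
  · convert ((auxF_tendsto_mul α 1 hα zero_le_one).const_mul (auxF α t - auxF α t₁)).add
      ((auxF_tendsto_mul α t₁ hα h0).const_mul (auxF α 1 - auxF α t)) using 2
    · ring
    · ring
  · convert (auxF_tendsto_mul α t hα h0t).const_mul (auxF α 1 - auxF α t₁) using 2
    · ring
    · ring

lemma aux_convex (α t₁ t : ℝ) (hα : 1 < α) (h0 : 0 ≤ t₁) (h1 : t₁ ≤ t) (h2 : t ≤ 1)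
    (h3 : t₁ < 1)
    (H : ∀ y ∈ Set.Icc (0 : ℝ) (Real.log 2),
        ConvexOn ℝ (Set.Icc (0 : ℝ) (Real.log 2)) (fun x => hhat α x y)) :
    (auxF α t - auxF α t₁) + (auxF α 1 - auxF α t) * t₁ ^ 2 ≤
      (auxF α 1 - auxF α t₁) * t ^ 2 := by
  have hm := (auxF_mono α hα)
  have a1 : auxF α t₁ ≤ auxF α t := hm.monotoneOn ⟨h0, by linarith⟩ ⟨by linarith, h2⟩ h1
  have a2 : auxF α t ≤ auxF α 1 := hm.monotoneOn ⟨by linarith, h2⟩ ⟨by norm_num, le_rfl⟩ h2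
  have a3 : auxF α t₁ < auxF α 1 := hm ⟨h0, by linarith⟩ ⟨by norm_num, le_rfl⟩ h3
  have hk : 0 < α - 1 := by linarith
  have hd : 0 < auxF α 1 - auxF α t₁ := by linarith
  have h0t : 0 ≤ t := by linarith
  obtain ⟨T1, T2⟩ := aux_tend α t₁ t hα h0 h0t
  have := le_of_tendsto_of_tendsto T1 T2 (by
    filter_upwards [Ioo_mem_nhdsGT (show (0 : ℝ) < 1 by norm_num)] with s hs
    have hC := (H _ (aux_mem α s hα hs.1.le hs.2.le)).2
      (aux_mem α 1 hα (by norm_num) le_rfl) (aux_mem α t₁ hα h0 h3.le)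
      (show 0 ≤ (auxF α t - auxF α t₁) / (auxF α 1 - auxF α t₁) from
        div_nonneg (by linarith) hd.le)
      (show 0 ≤ (auxF α 1 - auxF α t) / (auxF α 1 - auxF α t₁) from
        div_nonneg (by linarith) hd.le) (by field_simp; ring)
    simp only [smul_eq_mul] at hC
    rw [aux_comb _ _ _ _ _ hk a3, hhat_eq α t s hα h0t h2 hs.1.le hs.2.le,
      hhat_eq α 1 s hα (by norm_num) le_rfl hs.1.le hs.2.le,
      hhat_eq α t₁ s hα h0 h3.le hs.1.le hs.2.le] at hC
    have := aux_order _ _ _ _ _ _ _ _ hk a3 hC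
    exact div_le_div_of_nonneg_right this (sq_nonneg s))
  exact le_of_mul_le_mul_left this (by have : 0 < α := by linarith
                                       positivity)

lemma aux_concave (α t₁ t : ℝ) (hα : 1 < α) (h0 : 0 ≤ t₁) (h1 : t₁ ≤ t) (h2 : t ≤ 1)
    (h3 : t₁ < 1)
    (H : ∀ y ∈ Set.Icc (0 : ℝ) (Real.log 2),
        ConcaveOn ℝ (Set.Icc (0 : ℝ) (Real.log 2)) (fun x => hhat α x y)) :
    (auxF α 1 - auxF α t₁) * t ^ 2 ≤
      (auxF α t - auxF α t₁) + (auxF α 1 - auxF α t) * t₁ ^ 2 := by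
  have hm := (auxF_mono α hα)
  have a1 : auxF α t₁ ≤ auxF α t := hm.monotoneOn ⟨h0, by linarith⟩ ⟨by linarith, h2⟩ h1
  have a2 : auxF α t ≤ auxF α 1 := hm.monotoneOn ⟨by linarith, h2⟩ ⟨by norm_num, le_rfl⟩ h2
  have a3 : auxF α t₁ < auxF α 1 := hm ⟨h0, by linarith⟩ ⟨by norm_num, le_rfl⟩ h3
  have hk : 0 < α - 1 := by linarith
  have hd : 0 < auxF α 1 - auxF α t₁ := by linarith
  have h0t : 0 ≤ t := by linarith
  obtain ⟨T1, T2⟩ := aux_tend α t₁ t hα h0 h0t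
  have := le_of_tendsto_of_tendsto T2 T1 (by
    filter_upwards [Ioo_mem_nhdsGT (show (0 : ℝ) < 1 by norm_num)] with s hs
    have hC := (H _ (aux_mem α s hα hs.1.le hs.2.le)).2
      (aux_mem α 1 hα (by norm_num) le_rfl) (aux_mem α t₁ hα h0 h3.le)
      (show 0 ≤ (auxF α t - auxF α t₁) / (auxF α 1 - auxF α t₁) from
        div_nonneg (by linarith) hd.le)
      (show 0 ≤ (auxF α 1 - auxF α t) / (auxF α 1 - auxF α t₁) from
        div_nonneg (by linarith) hd.le) (by field_simp; ring)
    simp only [smul_eq_mul] at hC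
    rw [aux_comb _ _ _ _ _ hk a3, hhat_eq α t s hα h0t h2 hs.1.le hs.2.le,
      hhat_eq α 1 s hα (by norm_num) le_rfl hs.1.le hs.2.le,
      hhat_eq α t₁ s hα h0 h3.le hs.1.le hs.2.le] at hC
    have := aux_order' _ _ _ _ _ _ _ _ hk a3 hC
    exact div_le_div_of_nonneg_right this (sq_nonneg s))
  exact le_of_mul_le_mul_left this (by have : 0 < α := by linarith
                                       positivity)

lemma not_convex_part (α : ℝ) (hα : 1.387 < α) :
    ¬ (∀ y ∈ Set.Icc (0 : ℝ) (Real.log 2),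
        ConvexOn ℝ (Set.Icc (0 : ℝ) (Real.log 2)) (fun x => hhat α x y)) := by
  intro H
  have h1 : 1 < α := by linarith
  have : α * (α - 1) / 2 ≤ auxF α 1 := by
    apply le_of_tendsto (auxF_tendsto α h1)
    filter_upwards [Ioo_mem_nhdsGT (show (0 : ℝ) < 1 by norm_num)] with t ht
    have := aux_convex α 0 t h1 le_rfl ht.1.le ht.2.le (by norm_num) H
    rw [auxF_zero] at this
    have ht0 := ht.1
    rw [div_le_iff₀ (by positivity)]
    nlinarith
  rw [auxF_one α h1] at this
  have := Real.log_two_lt_d9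
  nlinarith

lemma aux_tangent (α t₁ : ℝ) (hα : 1 < α) (h0 : 0 ≤ t₁) (h3 : t₁ < 1)
    (H : ∀ y ∈ Set.Icc (0 : ℝ) (Real.log 2),
        ConcaveOn ℝ (Set.Icc (0 : ℝ) (Real.log 2)) (fun x => hhat α x y)) :
    auxF α t₁ ≤ auxF α 1 - α / 4 * (1 - t₁ ^ 2) := by
  have hD1 : auxD α 1 = α / 2 := by
    have e1 : (0 : ℝ) ^ α = 0 := Real.zero_rpow (by linarith)
    have e2 : (0 : ℝ) ^ (α - 1) = 0 := Real.zero_rpow (by linarith)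
    have e3 : (2 : ℝ) ^ α = 2 * 2 ^ (α - 1) := by
      rw [Real.rpow_sub_one (by norm_num)]; ring
    have : (0 : ℝ) < 2 ^ (α - 1) := by positivity
    simp only [auxD, sub_self, e1, e2]
    norm_num
    rw [e3]
    field_simp
  -- the function G(t) = RHS - LHS has a sign near 1
  have hF := (auxF_deriv α 1 hα (by norm_num) le_rfl).tendsto_slope
  rw [hD1] at hF
  have hP := (hasDerivAt_pow 2 (1 : ℝ)).tendsto_slope
  have sub : nhdsWithin (1 : ℝ) (Set.Iio 1) ≤ nhdsWithin 1 {1}ᶜ :=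
    nhdsWithin_mono _ (fun x hx => ne_of_lt hx)
  have T1 := (hF.mono_left sub).const_mul (1 - t₁ ^ 2)
  have T2 := (hP.mono_left sub).const_mul (auxF α 1 - auxF α t₁)
  have := le_of_tendsto_of_tendsto T1 T2 (by
    filter_upwards [Ioo_mem_nhdsLT h3] with t ht
    have h := aux_concave α t₁ t hα h0 ht.1.le ht.2.le h3 H
    have hlt : 0 < 1 - t := by linarith [ht.2]
    simp only [slope_def_field]
    rw [← neg_div_neg_eq (auxF α t - auxF α 1), ← neg_div_neg_eq (t ^ 2 - 1 ^ 2),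
      ← mul_div_assoc, ← mul_div_assoc]
    apply div_le_div_of_nonneg_right _ (by linarith)
    nlinarith)
  norm_num at this
  nlinarith

lemma not_concave_part (α : ℝ) (hα : 1 < α) (h2 : α < 2) :
    ¬ (∀ y ∈ Set.Icc (0 : ℝ) (Real.log 2),
        ConcaveOn ℝ (Set.Icc (0 : ℝ) (Real.log 2)) (fun x => hhat α x y)) := by
  intro H
  have key : ∀ p : ℝ, 0 < p → p ≤ 1 / 8 → p ^ α ≤ 12 * p ^ 2 := by
    intro p hp hp8
    have h := aux_tangent α (1 - 2 * p) hα (by linarith) (by linarith) H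
    have hS := auxS_pos α (1 - 2 * p) (by linarith) (by linarith)
    have hq : binH α ((1 - (1 - 2 * p)) / 2) = _ := binH_eq α (1 - 2 * p) hα (by linarith) (by linarith)
    rw [show (1 - (1 - 2 * p)) / 2 = p by ring] at hq
    have hk : 0 < α - 1 := by linarith
    have hlog : auxF α (1 - 2 * p) = (α - 1) * Real.log 2 + Real.log (p ^ α + (1 - p) ^ α) := by
      unfold binH at hq
      rw [show (1 : ℝ) - α = -(α - 1) by ring] at hq
      field_simp at hq
      rw [mul_comm p 2] at hq
      linarith
    rw [hlog, auxF_one α hα] at h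
    have hb : 1 + α * (-p) ≤ (1 + (-p)) ^ α :=
      one_add_mul_self_le_rpow_one_add (by linarith) hα.le
    rw [← sub_eq_add_neg 1 p] at hb
    have hpa : 0 < p ^ α := Real.rpow_pos_of_pos hp α
    have hpl : p ^ α ≤ p := by
      have := Real.rpow_le_rpow_of_exponent_ge hp (by linarith) hα.le
      simpa using this
    set S := p ^ α + (1 - p) ^ α with hSdef
    have hSge : 1 - (α * p - p ^ α) ≤ S := by rw [hSdef]; linarith
    set w := α * p - p ^ α with hw
    have hw0 : 0 ≤ w := by nlinarith
    have hw2 : w ≤ 2 * p := by nlinarith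
    have hSp : 0 < S := by linarith
    have hl : 1 - S⁻¹ ≤ Real.log S := Real.one_sub_inv_le_log_of_pos hSp
    have hSi : S⁻¹ ≤ 1 + w + 2 * w ^ 2 := by
      rw [inv_le_comm₀ hSp (by positivity)]
      refine le_trans ?_ hSge
      rw [inv_le_iff_one_le_mul₀ (by positivity)]
      nlinarith [mul_nonneg (sq_nonneg w) (show 0 ≤ 1 - 2 * w by linarith)]
    nlinarith
  have hne : α - 2 ≠ 0 := by linarith
  have hp : (0 : ℝ) < 16 ^ (1 / (α - 2)) := by positivity
  have hle : (16 : ℝ) ^ (1 / (α - 2)) ≤ 1 / 8 := by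
    have h3 : 1 / (α - 2) ≤ -1 := by
      rw [div_le_iff_of_neg (by linarith)]
      linarith
    have h4 := Real.rpow_le_rpow_of_exponent_le (show (1 : ℝ) ≤ 16 by norm_num) h3
    rw [Real.rpow_neg_one] at h4
    linarith
  have hk := key _ hp hle
  set p : ℝ := 16 ^ (1 / (α - 2)) with hpdef
  have e1 : p ^ (α - 2) = 16 := by
    rw [hpdef, ← Real.rpow_mul (by norm_num), one_div, inv_mul_cancel₀ hne, Real.rpow_one]
  have e2 : p ^ α = 16 * p ^ 2 := by
    rw [← e1, ← Real.rpow_natCast p 2, ← Real.rpow_add hp]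
    norm_num
  have : 0 < p ^ 2 := by positivity
  linarith

end helpers

/-- For `α ∈ (1.387, 1.95)`, `ĥ_α` is neither convex nor concave
in its first argument uniformly over fixed second arguments. -/
theorem stmt_15 (α : ℝ) (h1 : (1.387 : ℝ) < α) (h2 : α < (1.95 : ℝ)) :
    ¬ (∀ y ∈ Set.Icc (0 : ℝ) (Real.log 2),
        ConvexOn ℝ (Set.Icc (0 : ℝ) (Real.log 2)) (fun x => hhat α x y)) ∧
    ¬ (∀ y ∈ Set.Icc (0 : ℝ) (Real.log 2),
        ConcaveOn ℝ (Set.Icc (0 : ℝ) (Real.log 2)) (fun x => hhat α x y)) := by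
  exact ⟨not_convex_part α h1, not_concave_part α (by linarith) (by linarith)⟩
end
end
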